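/- For each n let V_n be an n×n orthogonal matrix, let f, g: [0,1] → R_{>0} be bounded Riemann-integrable functions, and set Σ_X = V_n diag(f(1/n), …, f(n/n)) V_nᵀ and Σ_ε = V_n diag(g(1/n), …, g(n/n)) V_nᵀ. Let X ~ N(0, Σ_X) and ε ~ N(0, Σ_ε) be independent. Then, as n → ∞, the following convergences hold in probability: (1/n)‖X‖² → ∫_0^1 f(x) dx, (1/n)‖ε‖² → ∫_0^1 g(x) dx, (1/n) εᵀX → 0, and (1/n) XᵀΣ_εX → ∫_0^1 f(x)g(x) dx. -/

import Mathlib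

open MeasureTheory ProbabilityTheory Filter Topology Matrix

noncomputable section

/-- Sample mean `X̄ = (1/n) Σ_i X_i`. -/
def sampleMean {ι : Type*} [Fintype ι] (x : ι → ℝ) : ℝ := (∑ i, x i) / (Fintype.card ι : ℝ)

/-- Sample covariance `T_n = (1/n) Σ_i (X_i - X̄)(Y_i - Ȳ)`. -/
def sampleCov {ι : Type*} [Fintype ι] (x y : ι → ℝ) : ℝ :=
  (∑ i, (x i - sampleMean x) * (y i - sampleMean y)) / (Fintype.card ι : ℝ)

/-- Sample correlation `ρₙ`. -/
def sampleCorr {ι : Type*} [Fintype ι] (x y : ι → ℝ) : ℝ :=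
  (∑ i, (x i - sampleMean x) * (y i - sampleMean y)) /
    (Real.sqrt (∑ i, (x i - sampleMean x) ^ 2) * Real.sqrt (∑ i, (y i - sampleMean y) ^ 2))

/-- Convergence in distribution: weak convergence of the laws, tested against
bounded continuous functions. -/
def TendstoInDistribution (μ : ℕ → Measure ℝ) (ν : Measure ℝ) : Prop :=
  ∀ f : BoundedContinuousFunction ℝ ℝ,
    Tendsto (fun n => ∫ x, f x ∂(μ n)) atTop (𝓝 (∫ x, f x ∂ν))

/-- Convergence in probability to a constant, for a sequence of laws on `ℝ`. -/
def TendstoInProbability (μ : ℕ → Measure ℝ) (c : ℝ) : Prop :=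
  ∀ ε : ℝ, 0 < ε → Tendsto (fun n => μ n {x | ε ≤ |x - c|}) atTop (𝓝 0)

/-- `μ` is the centered multivariate Gaussian law `N(0, S)` on `ℝ^n`, characterized à la
Cramér–Wold: every linear functional `⟨a, ·⟩` has law `N(0, aᵀ S a)`. -/
def IsCenteredGaussian {n : ℕ} (μ : Measure (Fin n → ℝ)) (S : Matrix (Fin n) (Fin n) ℝ) : Prop :=
  IsProbabilityMeasure μ ∧
    ∀ a : Fin n → ℝ,
      Measure.map (fun x => ∑ i, a i * x i) μ =
        gaussianReal 0 (Real.toNNReal (a ⬝ᵥ S.mulVec a))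

/-- The matrix `V diag(h(1/n), …, h(n/n)) Vᵀ`. -/
def specMatrix (n : ℕ) (V : Matrix (Fin n) (Fin n) ℝ) (h : ℝ → ℝ) : Matrix (Fin n) (Fin n) ℝ :=
  V * Matrix.diagonal (fun i : Fin n => h ((((i : ℕ) : ℝ) + 1) / n)) * Vᵀ

/-!
Rotating by `Vᵀ` makes the coordinates of `X` and `ε` independent, with variances `f (i / n)` and
`g (i / n)`. The first, second and fourth statistics are then averages of independent multiples of
squared Gaussians, and the third is an average of independent products of centered Gaussians. Their
variances are `O(1 / n)` because the eigenvalues are bounded, so Chebyshev's inequality reduces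
everything to the means, which are Riemann sums. A Riemann sum of `h` is the integral of the step
function `x ↦ h (⌈n x⌉ / n)`, so it converges by dominated convergence.
-/

section RiemannSums

lemma succ_div_mem_Icc {n : ℕ} (i : Fin n) : ((i : ℕ) + 1 : ℝ) / n ∈ Set.Icc (0 : ℝ) 1 := by
  have hn : (0 : ℝ) < n := by exact_mod_cast i.pos
  exact ⟨by positivity, (div_le_one hn).2 (by exact_mod_cast i.isLt)⟩

variable {E : Type*} [NormedAddCommGroup E] [NormedSpace ℝ E] [CompleteSpace E]

lemma integral_ceil_mul_div (h : ℝ → E) {n : ℕ} (hn : n ≠ 0) :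
    ∫ x in (0 : ℝ)..1, h (⌈x * n⌉₊ / n) = (n : ℝ)⁻¹ • ∑ i : Fin n, h (((i : ℕ) + 1 : ℝ) / n) := by
  have hn' : (0 : ℝ) < n := by positivity
  have hstep (k : ℕ) : Set.EqOn (fun x : ℝ => h (⌈x * n⌉₊ / n)) (fun _ => h ((k + 1 : ℝ) / n))
      (Set.uIoc ((k : ℝ) / n) ((k + 1 : ℕ) / n)) := by
    intro x hx
    rw [Set.uIoc_of_le (by gcongr; simp)] at hx
    have hceil : ⌈x * n⌉₊ = k + 1 := by
      rw [Nat.ceil_eq_iff k.succ_ne_zero]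
      exact ⟨by simpa using (div_lt_iff₀ hn').1 hx.1, (le_div_iff₀ hn').1 hx.2⟩
    simp [hceil]
  have hsum := intervalIntegral.sum_integral_adjacent_intervals (μ := volume)
    (f := fun x : ℝ => h (⌈x * n⌉₊ / n)) (a := fun k : ℕ => (k : ℝ) / n) (n := n)
    fun k _ => intervalIntegrable_const.congr (hstep k).symm
  simp only [Nat.cast_zero, zero_div, div_self hn'.ne'] at hsum
  rw [← hsum, Fin.sum_univ_eq_sum_range (fun i : ℕ => h ((i + 1 : ℝ) / n)), Finset.smul_sum]
  refine Finset.sum_congr rfl fun k _ => ?_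
  rw [intervalIntegral.integral_congr_ae (Eventually.of_forall fun x hx => hstep k hx),
    intervalIntegral.integral_const]
  congr 1
  push_cast
  ring

theorem tendsto_riemannSum_of_ae_continuousAt {h : ℝ → E} {C : ℝ}
    (hC : ∀ x ∈ Set.Icc (0 : ℝ) 1, ‖h x‖ ≤ C)
    (hc : ∀ᵐ x ∂(volume.restrict (Set.Icc (0 : ℝ) 1)), ContinuousAt h x) :
    Tendsto (fun n : ℕ => (n : ℝ)⁻¹ • ∑ i : Fin n, h (((i : ℕ) + 1 : ℝ) / n)) atTop
      (𝓝 (∫ x in (0 : ℝ)..1, h x)) := by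
  suffices Tendsto (fun n : ℕ => ∫ x in (0 : ℝ)..1, h (⌈x * n⌉₊ / n)) atTop
      (𝓝 (∫ x in (0 : ℝ)..1, h x)) from
    this.congr' <| (eventually_ne_atTop 0).mono fun n hn => integral_ceil_mul_div h hn
  refine intervalIntegral.tendsto_integral_filter_of_dominated_convergence (fun _ => C)
    (Eventually.of_forall fun n => ?_) ?_ intervalIntegrable_const ?_
  · exact ((StronglyMeasurable.of_discrete (f := fun k : ℕ => h (k / n))).comp_measurable
      (by fun_prop : Measurable fun x : ℝ => ⌈x * n⌉₊)).aestronglyMeasurable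
  · filter_upwards [eventually_gt_atTop 0] with n hn
    refine Eventually.of_forall fun x hx => hC _ ⟨by positivity, ?_⟩
    rw [Set.uIoc_of_le zero_le_one] at hx
    have hceil : ⌈x * n⌉₊ ≤ n := Nat.ceil_le.2 (mul_le_of_le_one_left n.cast_nonneg hx.2)
    exact div_le_one_of_le₀ (by exact_mod_cast hceil) n.cast_nonneg
  · filter_upwards [(ae_restrict_iff' measurableSet_Icc).1 hc] with x hx hx'
    rw [Set.uIoc_of_le zero_le_one] at hx'
    exact (hx ⟨hx'.1.le, hx'.2⟩).tendsto.comp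
      ((tendsto_nat_ceil_mul_div_atTop hx'.1.le).comp tendsto_natCast_atTop_atTop)

lemma tendsto_average_of_nonneg_of_le {h : ℝ → ℝ} {C : ℝ}
    (h0 : ∀ x ∈ Set.Icc (0 : ℝ) 1, 0 ≤ h x)
    (hC : ∀ x ∈ Set.Icc (0 : ℝ) 1, h x ≤ C)
    (hc : ∀ᵐ x ∂(volume.restrict (Set.Icc (0 : ℝ) 1)), ContinuousAt h x) :
    Tendsto (fun n : ℕ => (∑ i : Fin n, h (((i : ℕ) + 1 : ℝ) / n)) / n) atTop
      (𝓝 (∫ x in (0 : ℝ)..1, h x)) := by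
  simpa only [div_eq_inv_mul, smul_eq_mul] using tendsto_riemannSum_of_ae_continuousAt
    (fun x hx => (Real.norm_of_nonneg (h0 x hx)).trans_le (hC x hx)) hc

end RiemannSums

section WeakLaw

lemma TendstoInProbability.comp_measurePreserving {Ω Ω' : ℕ → Type*}
    [∀ n, MeasurableSpace (Ω n)] [∀ n, MeasurableSpace (Ω' n)] {P : (n : ℕ) → Measure (Ω n)}
    {Q : (n : ℕ) → Measure (Ω' n)} {φ : (n : ℕ) → Ω n → Ω' n} {T : (n : ℕ) → Ω' n → ℝ} {c : ℝ}
    (h : TendstoInProbability (fun n => (Q n).map (T n)) c)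
    (hφ : ∀ n, MeasurePreserving (φ n) (P n) (Q n)) (hT : ∀ n, Measurable (T n)) :
    TendstoInProbability (fun n => (P n).map fun ω => T n (φ n ω)) c := by
  convert h using 2 with n
  rw [← (hφ n).map_eq, Measure.map_map (hT n) (hφ n).measurable]
  rfl

theorem tendstoInProbability_of_tendsto_variance {Ω : ℕ → Type*} [∀ n, MeasurableSpace (Ω n)]
    {P : (n : ℕ) → Measure (Ω n)} [∀ n, IsFiniteMeasure (P n)] {T : (n : ℕ) → Ω n → ℝ} {c : ℝ}
    (hT : ∀ n, MemLp (T n) 2 (P n))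
    (hmean : Tendsto (fun n => ∫ ω, T n ω ∂(P n)) atTop (𝓝 c))
    (hvar : Tendsto (fun n => Var[T n; P n]) atTop (𝓝 0)) :
    TendstoInProbability (fun n => (P n).map (T n)) c := by
  intro δ hδ
  have hbound : Tendsto (fun n => ENNReal.ofReal (Var[T n; P n] / (δ / 2) ^ 2)) atTop (𝓝 0) := by
    simpa using ENNReal.tendsto_ofReal (hvar.div_const ((δ / 2) ^ 2))
  refine tendsto_of_tendsto_of_tendsto_of_le_of_le' tendsto_const_nhds hbound
    (Eventually.of_forall fun _ => zero_le) ?_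
  filter_upwards [Metric.tendsto_nhds.1 hmean (δ / 2) (half_pos hδ)] with n hn
  rw [Measure.map_apply_of_aemeasurable (hT n).aestronglyMeasurable.aemeasurable
    (measurableSet_le (by fun_prop) (by fun_prop))]
  refine (measure_mono fun ω hω => ?_).trans (meas_ge_le_variance_div_sq (hT n) (half_pos hδ))
  simp only [Set.mem_preimage, Set.mem_ofPred_eq] at hω ⊢
  rw [Real.dist_eq] at hn
  linarith [abs_sub_le (T n ω) (∫ ω, T n ω ∂(P n)) c]

theorem tendstoInProbability_average_pi {E : Type*} [MeasurableSpace E]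
    {ν : (n : ℕ) → Fin n → Measure E} [∀ n i, IsProbabilityMeasure (ν n i)]
    {φ : (n : ℕ) → Fin n → E → ℝ} {C c : ℝ} (hφ : ∀ n i, MemLp (φ n i) 2 (ν n i))
    (hvar : ∀ n i, Var[φ n i; ν n i] ≤ C)
    (hmean : Tendsto (fun n : ℕ => (∑ i, ∫ x, φ n i x ∂(ν n i)) / n) atTop (𝓝 c)) :
    TendstoInProbability
      (fun n => (Measure.pi (ν n)).map fun ω => (∑ i, φ n i (ω i)) / (n : ℝ)) c := by
  have hφ' (n : ℕ) (i : Fin n) : MemLp (fun ω => φ n i (ω i)) 2 (Measure.pi (ν n)) :=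
    (hφ n i).comp_measurePreserving (measurePreserving_eval (ν n) i)
  refine tendstoInProbability_of_tendsto_variance (fun n => ?_) ?_ ?_
  · simpa only [div_eq_inv_mul] using (memLp_finsetSum _ fun i _ => hφ' n i).const_mul (n : ℝ)⁻¹
  · refine hmean.congr fun n => ?_
    rw [integral_div, integral_finsetSum _ fun i _ => (hφ' n i).integrable one_le_two]
    simp_rw [integral_comp_eval (μ := ν n) (hφ n _).aestronglyMeasurable]
  · refine squeeze_zero (fun n => variance_nonneg _ _) (fun n => ?_)
      (tendsto_const_div_atTop_nhds_zero_nat C)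
    calc Var[fun ω => (∑ i, φ n i (ω i)) / (n : ℝ); Measure.pi (ν n)]
        = ((n : ℝ)⁻¹) ^ 2 * ∑ i, Var[φ n i; ν n i] := by
          simp_rw [div_eq_inv_mul, variance_const_mul, ← variance_sum_pi (hφ n),
            Finset.sum_fn]
      _ ≤ ((n : ℝ)⁻¹) ^ 2 * ∑ _i : Fin n, C := by gcongr with i; exact hvar n i
      _ = C / n := by
          rcases eq_or_ne (n : ℝ) 0 with hn | hn
          · simp [hn]
          · simp only [Finset.sum_const, Finset.card_univ, Fintype.card_fin, nsmul_eq_mul]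
            field_simp

end WeakLaw

section GaussianMoments

open scoped NNReal

lemma integral_sq_gaussianReal (v : ℝ≥0) : ∫ x, x ^ 2 ∂(gaussianReal 0 v) = v := by
  rw [← variance_of_integral_eq_zero (X := fun x => x) (by fun_prop) integral_id_gaussianReal]
  exact variance_fun_id_gaussianReal

lemma memLp_sq_gaussianReal (v : ℝ≥0) : MemLp (fun x : ℝ => x ^ 2) 2 (gaussianReal 0 v) := by
  rw [memLp_two_iff_integrable_sq (by fun_prop)]
  convert (memLp_id_gaussianReal (μ := 0) (v := v) 4).integrable_norm_pow (by simp) using 2 with x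
  simp [← pow_mul, Even.pow_abs (by decide : Even 4)]

lemma variance_sq_gaussianReal (v : ℝ≥0) :
    Var[fun x => x ^ 2; gaussianReal 0 v] =
      (v : ℝ) ^ 2 * Var[fun x => x ^ 2; gaussianReal 0 1] := by
  have hscale : gaussianReal 0 v = (gaussianReal 0 1).map (√(v : ℝ) * ·) := by
    rw [gaussianReal_map_const_mul]
    congr <;> simp
  rw [hscale, variance_map (by fun_prop) (by fun_prop), ← variance_const_mul]
  simp [Function.comp_def, mul_pow]

lemma memLp_mul_prod {α β : Type*} [MeasurableSpace α] [MeasurableSpace β] {μ : Measure α}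
    {ν : Measure β} [SFinite μ] [SFinite ν] {X : α → ℝ} {Y : β → ℝ} (hX : MemLp X 2 μ)
    (hY : MemLp Y 2 ν) : MemLp (fun p : α × β => X p.1 * Y p.2) 2 (μ.prod ν) := by
  refine (memLp_two_iff_integrable_sq (hX.1.comp_fst.mul hY.1.comp_snd)).2 ?_
  simpa [mul_pow] using hX.integrable_sq.mul_prod hY.integrable_sq

lemma integral_mul_gaussianReal_prod (u v : ℝ≥0) :
    ∫ p : ℝ × ℝ, p.1 * p.2 ∂((gaussianReal 0 u).prod (gaussianReal 0 v)) = 0 := by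
  rw [integral_prod_mul (fun x : ℝ => x) (fun x : ℝ => x), integral_id_gaussianReal, zero_mul]

lemma variance_mul_gaussianReal_prod (u v : ℝ≥0) :
    Var[fun p : ℝ × ℝ => p.1 * p.2; (gaussianReal 0 u).prod (gaussianReal 0 v)] = u * v := by
  rw [variance_of_integral_eq_zero (by fun_prop) (integral_mul_gaussianReal_prod u v)]
  simp_rw [mul_pow]
  rw [integral_prod_mul (fun x : ℝ => x ^ 2) (fun x : ℝ => x ^ 2), integral_sq_gaussianReal,
    integral_sq_gaussianReal]

end GaussianMoments

namespace IsCenteredGaussian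

variable {n : ℕ} {μ : Measure (Fin n → ℝ)} {S V : Matrix (Fin n) (Fin n) ℝ} {d : Fin n → ℝ}

lemma map_mulVec {m : ℕ} (hμ : IsCenteredGaussian μ S) (W : Matrix (Fin m) (Fin n) ℝ) :
    IsCenteredGaussian (μ.map (W *ᵥ ·)) (W * S * Wᵀ) := by
  have := hμ.1
  have hW : Measurable (W *ᵥ · : (Fin n → ℝ) → Fin m → ℝ) := by fun_prop
  refine ⟨Measure.isProbabilityMeasure_map hW.aemeasurable, fun a => ?_⟩
  have hcomp : (fun x => ∑ i, a i * x i) ∘ (W *ᵥ ·) = fun x => ∑ j, (Wᵀ *ᵥ a) j * x j := by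
    ext x
    change a ⬝ᵥ W *ᵥ x = Wᵀ *ᵥ a ⬝ᵥ x
    rw [dotProduct_mulVec, mulVec_transpose]
  rw [Measure.map_map (by fun_prop) hW, hcomp, hμ.2, ← mulVec_mulVec, ← mulVec_mulVec,
    dotProduct_mulVec a, ← mulVec_transpose]

lemma charFun_map_toLp (hμ : IsCenteredGaussian μ S) (a : Fin n → ℝ) :
    charFun (μ.map (WithLp.toLp 2)) (WithLp.toLp 2 a) =
      Complex.exp (-((a ⬝ᵥ S *ᵥ a).toNNReal : ℝ) / 2) := by
  calc charFun (μ.map (WithLp.toLp 2)) (WithLp.toLp 2 a)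
      = charFun (μ.map fun x => ∑ i, a i * x i) 1 := by
        rw [charFun_apply, charFun_apply_real, integral_map (by fun_prop) (by fun_prop),
          integral_map (Measurable.aemeasurable (by fun_prop)) (by fun_prop)]
        simp [PiLp.inner_apply]
    _ = Complex.exp (-((a ⬝ᵥ S *ᵥ a).toNNReal : ℝ) / 2) := by
        rw [hμ.2, charFun_gaussianReal]
        congr 1
        simp [neg_div]

lemma eq_pi_of_diagonal (hμ : IsCenteredGaussian μ (diagonal d)) (hd : ∀ i, 0 ≤ d i) :
    μ = Measure.pi fun i => gaussianReal 0 (d i).toNNReal := by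
  have := hμ.1
  refine charFun_eq_pi_iff.1 fun t => ?_
  have hform : t.ofLp ⬝ᵥ diagonal d *ᵥ t.ofLp = ∑ i, d i * t i ^ 2 := by
    simp only [dotProduct, mulVec_diagonal]
    exact Finset.sum_congr rfl fun i _ => by ring
  have hform_nonneg : 0 ≤ ∑ i, d i * t i ^ 2 :=
    Finset.sum_nonneg fun i _ => mul_nonneg (hd i) (sq_nonneg _)
  refine (hμ.charFun_map_toLp t.ofLp).trans ?_
  simp_rw [hform, charFun_gaussianReal, ← Complex.exp_sum,
    Real.coe_toNNReal _ hform_nonneg, Real.coe_toNNReal _ (hd _)]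
  congr 1
  push_cast
  simp [Finset.sum_div, neg_div]

lemma measurePreserving_transpose_mulVec (hμ : IsCenteredGaussian μ (V * diagonal d * Vᵀ))
    (hV : Vᵀ * V = 1) (hd : ∀ i, 0 ≤ d i) :
    MeasurePreserving (Vᵀ *ᵥ ·) μ (Measure.pi fun i => gaussianReal 0 (d i).toNNReal) := by
  refine ⟨by fun_prop, eq_pi_of_diagonal ?_ hd⟩
  convert hμ.map_mulVec Vᵀ using 1
  rw [transpose_transpose, mul_assoc, mul_assoc, hV, mul_one, ← mul_assoc, hV, one_mul]

end IsCenteredGaussian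

section QuadraticForms

section Matrix

variable {m n R : Type*} [Fintype m] [Fintype n] [CommSemiring R]

lemma dotProduct_mulVec_conj_diagonal [DecidableEq n] (V : Matrix m n R) (e : n → R) (x : m → R) :
    x ⬝ᵥ (V * diagonal e * Vᵀ) *ᵥ x = ∑ i, e i * (Vᵀ *ᵥ x) i ^ 2 := by
  rw [← mulVec_mulVec, ← mulVec_mulVec, dotProduct_mulVec, ← mulVec_transpose]
  simp only [dotProduct, mulVec_diagonal]
  exact Finset.sum_congr rfl fun i _ => by ring

lemma transpose_mulVec_dotProduct_transpose_mulVec [DecidableEq m] {V : Matrix m n R}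
    (hV : V * Vᵀ = 1) (x y : m → R) : (Vᵀ *ᵥ x) ⬝ᵥ (Vᵀ *ᵥ y) = x ⬝ᵥ y := by
  rw [dotProduct_mulVec, ← mulVec_transpose, transpose_transpose, mulVec_mulVec, hV, one_mulVec]

end Matrix

variable {V : (n : ℕ) → Matrix (Fin n) (Fin n) ℝ} {μ ε : (n : ℕ) → Measure (Fin n → ℝ)}
  {d e : (n : ℕ) → Fin n → ℝ} {C c : ℝ}

theorem tendstoInProbability_quadraticForm (hV : ∀ n, (V n)ᵀ * V n = 1)
    (hμ : ∀ n, IsCenteredGaussian (μ n) (V n * diagonal (d n) * (V n)ᵀ))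
    (hd : ∀ n i, 0 ≤ d n i) (hC : ∀ n i, |d n i * e n i| ≤ C)
    (hc : Tendsto (fun n : ℕ => (∑ i, d n i * e n i) / n) atTop (𝓝 c)) :
    TendstoInProbability
      (fun n => (μ n).map fun x => (x ⬝ᵥ (V n * diagonal (e n) * (V n)ᵀ) *ᵥ x) / (n : ℝ)) c := by
  have hpi : TendstoInProbability (fun n =>
      (Measure.pi fun i => gaussianReal 0 (d n i).toNNReal).map
        fun z => (∑ i, e n i * z i ^ 2) / (n : ℝ)) c := by
    refine tendstoInProbability_average_pi (φ := fun n i x => e n i * x ^ 2)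
      (C := C ^ 2 * Var[fun x => x ^ 2; gaussianReal 0 1])
      (fun n i => (memLp_sq_gaussianReal _).const_mul _) (fun n i => ?_) ?_
    · rw [variance_const_mul, variance_sq_gaussianReal, Real.coe_toNNReal _ (hd n i), ← mul_assoc,
        ← mul_pow, mul_comm (e n i), ← sq_abs]
      gcongr
      · exact variance_nonneg _ _
      · exact hC n i
    · simpa [integral_const_mul, integral_sq_gaussianReal, hd, mul_comm] using hc
  simpa only [dotProduct_mulVec_conj_diagonal] using hpi.comp_measurePreserving
    (fun n => (hμ n).measurePreserving_transpose_mulVec (hV n) (hd n)) (fun n => by fun_prop)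

theorem tendstoInProbability_sum_sq (hV : ∀ n, (V n)ᵀ * V n = 1)
    (hμ : ∀ n, IsCenteredGaussian (μ n) (V n * diagonal (d n) * (V n)ᵀ))
    (hd : ∀ n i, 0 ≤ d n i) (hC : ∀ n i, d n i ≤ C)
    (hc : Tendsto (fun n : ℕ => (∑ i, d n i) / n) atTop (𝓝 c)) :
    TendstoInProbability (fun n => (μ n).map fun x => (∑ i, x i ^ 2) / (n : ℝ)) c := by
  have hV' (n : ℕ) : V n * (V n)ᵀ = 1 := mul_eq_one_comm.1 (hV n)
  have := tendstoInProbability_quadraticForm (e := fun _ _ => 1) hV hμ hd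
    (fun n i => by simpa [abs_of_nonneg (hd n i)] using hC n i) (by simpa using hc)
  simpa [hV', dotProduct, ← sq] using this

theorem tendstoInProbability_dotProduct_prod (hV : ∀ n, (V n)ᵀ * V n = 1)
    (hμ : ∀ n, IsCenteredGaussian (μ n) (V n * diagonal (d n) * (V n)ᵀ))
    (hε : ∀ n, IsCenteredGaussian (ε n) (V n * diagonal (e n) * (V n)ᵀ))
    (hd : ∀ n i, 0 ≤ d n i) (he : ∀ n i, 0 ≤ e n i) (hC : ∀ n i, d n i * e n i ≤ C) :
    TendstoInProbability
      (fun n => ((μ n).prod (ε n)).map fun p => (p.1 ⬝ᵥ p.2) / (n : ℝ)) 0 := by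
  have hpi : TendstoInProbability (fun n =>
      (Measure.pi fun i =>
        (gaussianReal 0 (d n i).toNNReal).prod (gaussianReal 0 (e n i).toNNReal)).map
        fun z => (∑ i, (z i).1 * (z i).2) / (n : ℝ)) 0 := by
    refine tendstoInProbability_average_pi (φ := fun _ _ (p : ℝ × ℝ) => p.1 * p.2) (C := C)
      (fun n i => memLp_mul_prod (memLp_id_gaussianReal 2) (memLp_id_gaussianReal 2))
      (fun n i => ?_) (by simp [integral_mul_gaussianReal_prod])
    simpa [variance_mul_gaussianReal_prod, hd, he] using hC n i
  have hrotate (n : ℕ) : MeasurePreserving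
      (fun p : (Fin n → ℝ) × (Fin n → ℝ) => fun i => (((V n)ᵀ *ᵥ p.1) i, ((V n)ᵀ *ᵥ p.2) i))
      ((μ n).prod (ε n)) (Measure.pi fun i =>
        (gaussianReal 0 (d n i).toNNReal).prod (gaussianReal 0 (e n i).toNNReal)) := by
    have := (hμ n).1
    have := (hε n).1
    exact (measurePreserving_arrowProdEquivProdArrow ℝ ℝ (Fin n) _ _).symm.comp
      (((hμ n).measurePreserving_transpose_mulVec (hV n) (hd n)).prod
        ((hε n).measurePreserving_transpose_mulVec (hV n) (he n)))
  have hdot (n : ℕ) (x y : Fin n → ℝ) :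
      x ⬝ᵥ y = ∑ i, ((V n)ᵀ *ᵥ x) i * ((V n)ᵀ *ᵥ y) i :=
    (transpose_mulVec_dotProduct_transpose_mulVec (mul_eq_one_comm.1 (hV n)) x y).symm
  simpa only [hdot] using hpi.comp_measurePreserving hrotate (fun n => by fun_prop)

end QuadraticForms

theorem ols_lln_convergences_general
    (V : (n : ℕ) → Matrix (Fin n) (Fin n) ℝ) (hV : ∀ n, (V n)ᵀ * V n = 1)
    (f g : ℝ → ℝ)
    (hf_nonneg : ∀ x ∈ Set.Icc (0 : ℝ) 1, 0 ≤ f x)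
    (hg_nonneg : ∀ x ∈ Set.Icc (0 : ℝ) 1, 0 ≤ g x)
    (hf_bdd : ∃ C : ℝ, ∀ x ∈ Set.Icc (0 : ℝ) 1, f x ≤ C)
    (hg_bdd : ∃ C : ℝ, ∀ x ∈ Set.Icc (0 : ℝ) 1, g x ≤ C)
    (hf_cont : ∀ᵐ x ∂(volume.restrict (Set.Icc (0 : ℝ) 1)), ContinuousAt f x)
    (hg_cont : ∀ᵐ x ∂(volume.restrict (Set.Icc (0 : ℝ) 1)), ContinuousAt g x)
    (μ ε : (n : ℕ) → Measure (Fin n → ℝ))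
    (hμ : ∀ n, IsCenteredGaussian (μ n) (specMatrix n (V n) f))
    (hε : ∀ n, IsCenteredGaussian (ε n) (specMatrix n (V n) g)) :
    TendstoInProbability
      (fun n => Measure.map
        (fun p : (Fin n → ℝ) × (Fin n → ℝ) => (∑ i, p.1 i ^ 2) / (n : ℝ))
        ((μ n).prod (ε n)))
      (∫ x in (0 : ℝ)..1, f x) ∧
    TendstoInProbability
      (fun n => Measure.map
        (fun p : (Fin n → ℝ) × (Fin n → ℝ) => (∑ i, p.2 i ^ 2) / (n : ℝ))
        ((μ n).prod (ε n)))
      (∫ x in (0 : ℝ)..1, g x) ∧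
    TendstoInProbability
      (fun n => Measure.map
        (fun p : (Fin n → ℝ) × (Fin n → ℝ) => (∑ i, p.2 i * p.1 i) / (n : ℝ))
        ((μ n).prod (ε n)))
      0 ∧
    TendstoInProbability
      (fun n => Measure.map
        (fun p : (Fin n → ℝ) × (Fin n → ℝ) =>
          (p.1 ⬝ᵥ (specMatrix n (V n) g).mulVec p.1) / (n : ℝ))
        ((μ n).prod (ε n)))
      (∫ x in (0 : ℝ)..1, f x * g x) := by
  obtain ⟨Cf, hCf⟩ := hf_bdd
  obtain ⟨Cg, hCg⟩ := hg_bdd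
  have hfg_le (x : ℝ) (hx : x ∈ Set.Icc (0 : ℝ) 1) : f x * g x ≤ Cf * Cg :=
    mul_le_mul (hCf x hx) (hCg x hx) (hg_nonneg x hx) ((hf_nonneg x hx).trans (hCf x hx))
  have hfg_nonneg (x : ℝ) (hx : x ∈ Set.Icc (0 : ℝ) 1) : 0 ≤ f x * g x :=
    mul_nonneg (hf_nonneg x hx) (hg_nonneg x hx)
  have hfg_cont : ∀ᵐ x ∂(volume.restrict (Set.Icc (0 : ℝ) 1)),
      ContinuousAt (fun x => f x * g x) x := by
    filter_upwards [hf_cont, hg_cont] with x hfx hgx using hfx.mul hgx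
  have hf0 (n : ℕ) (i : Fin n) : 0 ≤ f (((i : ℕ) + 1 : ℝ) / n) := hf_nonneg _ (succ_div_mem_Icc i)
  have hg0 (n : ℕ) (i : Fin n) : 0 ≤ g (((i : ℕ) + 1 : ℝ) / n) := hg_nonneg _ (succ_div_mem_Icc i)
  have hfg_abs_le (n : ℕ) (i : Fin n) :
      |f (((i : ℕ) + 1 : ℝ) / n) * g (((i : ℕ) + 1 : ℝ) / n)| ≤ Cf * Cg :=
    (abs_of_nonneg (hfg_nonneg _ (succ_div_mem_Icc i))).trans_le (hfg_le _ (succ_div_mem_Icc i))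
  have hfg_lim := tendsto_average_of_nonneg_of_le hfg_nonneg hfg_le hfg_cont
  have hμ_prob (n : ℕ) : IsProbabilityMeasure (μ n) := (hμ n).1
  have hε_prob (n : ℕ) : IsProbabilityMeasure (ε n) := (hε n).1
  refine ⟨?_, ?_, ?_, ?_⟩
  · exact (tendstoInProbability_sum_sq hV hμ hf0 (fun n i => hCf _ (succ_div_mem_Icc i))
      (tendsto_average_of_nonneg_of_le hf_nonneg hCf hf_cont)).comp_measurePreserving
      (fun n => measurePreserving_fst) (fun n => by fun_prop)
  · exact (tendstoInProbability_sum_sq hV hε hg0 (fun n i => hCg _ (succ_div_mem_Icc i))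
      (tendsto_average_of_nonneg_of_le hg_nonneg hCg hg_cont)).comp_measurePreserving
      (fun n => measurePreserving_snd) (fun n => by fun_prop)
  · simpa only [dotProduct, mul_comm] using tendstoInProbability_dotProduct_prod hV hμ hε hf0 hg0
      fun n i => hfg_le _ (succ_div_mem_Icc i)
  · exact (tendstoInProbability_quadraticForm hV hμ hf0 hfg_abs_le hfg_lim).comp_measurePreserving
      (fun n => measurePreserving_fst) (fun n => by fun_prop)

/-- **(Law-of-large-numbers lemmas for simultaneously diagonalizable Gaussians).**
With `Σ_X = V diag(f(i/n)) Vᵀ`, `Σ_ε = V diag(g(i/n)) Vᵀ`, `X ~ N(0,Σ_X)` and `ε ~ N(0,Σ_ε)`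
independent, and `f, g` positive, bounded and Riemann integrable (i.e. a.e. continuous) on
`[0,1]`: `(1/n)‖X‖² → ∫f`, `(1/n)‖ε‖² → ∫g`, `(1/n)εᵀX → 0` and
`(1/n)XᵀΣ_εX → ∫fg`, all in probability. -/
theorem ols_lln_convergences
    (V : (n : ℕ) → Matrix (Fin n) (Fin n) ℝ) (hV : ∀ n, (V n)ᵀ * V n = 1)
    (f g : ℝ → ℝ)
    (hf_meas : Measurable f) (hg_meas : Measurable g)
    (hf_pos : ∀ x ∈ Set.Icc (0 : ℝ) 1, 0 < f x) (hg_pos : ∀ x ∈ Set.Icc (0 : ℝ) 1, 0 < g x)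
    (hf_bdd : ∃ C : ℝ, ∀ x ∈ Set.Icc (0 : ℝ) 1, f x ≤ C)
    (hg_bdd : ∃ C : ℝ, ∀ x ∈ Set.Icc (0 : ℝ) 1, g x ≤ C)
    (hf_cont : ∀ᵐ x ∂(volume.restrict (Set.Icc (0 : ℝ) 1)), ContinuousAt f x)
    (hg_cont : ∀ᵐ x ∂(volume.restrict (Set.Icc (0 : ℝ) 1)), ContinuousAt g x)
    (μ ε : (n : ℕ) → Measure (Fin n → ℝ))
    (hμ : ∀ n, IsCenteredGaussian (μ n) (specMatrix n (V n) f))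
    (hε : ∀ n, IsCenteredGaussian (ε n) (specMatrix n (V n) g)) :
    TendstoInProbability
      (fun n => Measure.map
        (fun p : (Fin n → ℝ) × (Fin n → ℝ) => (∑ i, p.1 i ^ 2) / (n : ℝ))
        ((μ n).prod (ε n)))
      (∫ x in (0 : ℝ)..1, f x) ∧
    TendstoInProbability
      (fun n => Measure.map
        (fun p : (Fin n → ℝ) × (Fin n → ℝ) => (∑ i, p.2 i ^ 2) / (n : ℝ))
        ((μ n).prod (ε n)))
      (∫ x in (0 : ℝ)..1, g x) ∧
    TendstoInProbability
      (fun n => Measure.map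
        (fun p : (Fin n → ℝ) × (Fin n → ℝ) => (∑ i, p.2 i * p.1 i) / (n : ℝ))
        ((μ n).prod (ε n)))
      0 ∧
    TendstoInProbability
      (fun n => Measure.map
        (fun p : (Fin n → ℝ) × (Fin n → ℝ) =>
          (p.1 ⬝ᵥ (specMatrix n (V n) g).mulVec p.1) / (n : ℝ))
        ((μ n).prod (ε n)))
      (∫ x in (0 : ℝ)..1, f x * g x) := by
  exact ols_lln_convergences_general V hV f g (fun x hx => (hf_pos x hx).le)
    (fun x hx => (hg_pos x hx).le) hf_bdd hg_bdd hf_cont hg_cont μ ε hμ hε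

end
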